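/- arXiv:2410.07008 — 2 statements merged into one kernel-verified Lean document; each statement's English description precedes it below -/
import Mathlib

section
/- Let F be an algebraically closed field and let θ : F^m → F^m be a polynomial map whose comorphism ϑ (the induced endomorphism of F[x₁,…,x_m]) satisfies: (i) det J(ϑ) ∈ F^× (the determinant of the Jacobian matrix (∂ϑ(x_i)/∂x_j) is a nonzero constant), and (ii) ϑ maps maximal ideals of F[x₁,…,x_m] to maximal ideals. Then ϑ is an automorphism of F[x₁,…,x_m]. -/
open MvPolynomial

open TensorProduct in
/-- Faithfully flat epimorphisms of commutative rings are bijective. -/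
theorem bijective_of_epi_faithfullyFlat {R S : Type*} [CommRing R] [CommRing S] [Algebra R S]
    [Module.FaithfullyFlat R S] (h : ∀ s : S, (1 : S) ⊗ₜ[R] s = s ⊗ₜ[R] (1 : S)) :
    Function.Bijective (algebraMap R S) := by
  refine ⟨FaithfulSMul.algebraMap_injective R S, ?_⟩
  have : Function.Surjective ((Algebra.linearMap R S).lTensor S) := by
    intro x
    induction x using TensorProduct.induction_on with
    | zero => exact ⟨0, by simp⟩
    | tmul u v =>
      refine ⟨(u * v) ⊗ₜ 1, ?_⟩
      simp only [LinearMap.lTensor_tmul, Algebra.linearMap_apply, map_one]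
      calc (u * v) ⊗ₜ[R] (1 : S) = u ⊗ₜ[R] 1 * v ⊗ₜ[R] 1 := by simp
        _ = u ⊗ₜ[R] 1 * 1 ⊗ₜ[R] v := by rw [h]
        _ = u ⊗ₜ[R] v := by simp
    | add u v hu hv =>
      obtain ⟨a, rfl⟩ := hu
      obtain ⟨b, rfl⟩ := hv
      exact ⟨a + b, by simp⟩
  exact (Module.FaithfullyFlat.lTensor_surjective_iff_surjective R S _).mp this

/-- Nullstellensatz. -/
theorem exists_sub_mem_of_isMaximal {F T : Type*} [Field F] [IsAlgClosed F] [CommRing T]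
    [Algebra F T] [Algebra.FiniteType F T] (N : Ideal T) [N.IsMaximal] (t : T) :
    ∃ a : F, t - algebraMap F T a ∈ N := by
  letI := Ideal.Quotient.field N
  have := finite_of_finite_type_of_isJacobsonRing F (T ⧸ N)
  obtain ⟨a, ha⟩ := (IsAlgClosed.algebraMap_bijective_of_isIntegral (k := F) (K := T ⧸ N)).2
    (Ideal.Quotient.mk N t)
  refine ⟨a, ?_⟩
  rw [← Ideal.Quotient.eq, ← ha]
  rfl

open TensorProduct in
theorem bijective_of_etale_of_maximal {F R S : Type*} [Field F] [IsAlgClosed F] [CommRing R]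
    [CommRing S] [Algebra F R] [Algebra F S] [Algebra R S] [IsScalarTower F R S]
    [Algebra.FiniteType F S] [Algebra.Etale R S]
    (hmax : ∀ M : Ideal R, M.IsMaximal → (M.map (algebraMap R S)).IsMaximal) :
    Function.Bijective (algebraMap R S) := by
  have hff : Module.FaithfullyFlat R S := by
    refine { submodule_ne_top := fun M hM h => (hmax M hM).ne_top ?_ }
    rw [Ideal.smul_top_eq_map] at h
    exact (Submodule.restrictScalars_eq_top_iff _ _ _).mp h
  apply bijective_of_epi_faithfullyFlat
  obtain ⟨e, he, hsp⟩ : ∃ e, IsIdempotentElem e ∧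
      KaehlerDifferential.ideal R S = Ideal.span {e} :=
    (Ideal.isIdempotentElem_iff_of_fg _ (KaehlerDifferential.ideal_fg R S)).mp <|
      (Ideal.cotangent_subsingleton_iff _).mp <| inferInstanceAs <| Subsingleton (Ω[S⁄R])
  have : Algebra.FiniteType F (S ⊗[R] S) :=
    Algebra.FiniteType.trans (S := S) inferInstance inferInstance
  have hN : ∀ N : Ideal (S ⊗[R] S), N.IsMaximal → KaehlerDifferential.ideal R S ≤ N := by
    intro N hN
    rw [← KaehlerDifferential.span_range_eq_ideal, Ideal.span_le]
    rintro _ ⟨s, rfl⟩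
    set M := N.comap (algebraMap R (S ⊗[R] S)) with hMdef
    have hM : M.IsMaximal := by
      have hs : Function.Surjective
          ((Ideal.Quotient.mk N).comp (algebraMap R (S ⊗[R] S))) := by
        intro y
        obtain ⟨t, rfl⟩ := Ideal.Quotient.mk_surjective y
        obtain ⟨a, ha⟩ := exists_sub_mem_of_isMaximal (F := F) N t
        refine ⟨algebraMap F R a, ?_⟩
        rw [RingHom.comp_apply, ← IsScalarTower.algebraMap_apply F R (S ⊗[R] S)]
        exact (Ideal.Quotient.eq.mpr ha).symm
      letI := Ideal.Quotient.field N
      have := RingHom.ker_isMaximal_of_surjective _ hs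
      rwa [← RingHom.comap_ker, Ideal.mk_ker] at this
    have := hmax M hM
    obtain ⟨a, ha⟩ := exists_sub_mem_of_isMaximal (F := F) (M.map (algebraMap R S)) s
    set d := s - algebraMap F S a with hd
    have h1 : ∀ x ∈ M.map (algebraMap R S), (1 : S) ⊗ₜ[R] x ∈ N := by
      intro x hx
      have : M.map (algebraMap R S) ≤
          N.comap (Algebra.TensorProduct.includeRight : S →ₐ[R] S ⊗[R] S).toRingHom := by
        rw [Ideal.map_le_iff_le_comap]
        intro r hr
        have hr' : algebraMap R (S ⊗[R] S) r ∈ N := hr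
        rw [← (Algebra.TensorProduct.includeRight : S →ₐ[R] S ⊗[R] S).commutes] at hr'
        exact hr'
      exact this hx
    have h2 : ∀ x ∈ M.map (algebraMap R S), x ⊗ₜ[R] (1 : S) ∈ N := by
      intro x hx
      have : M.map (algebraMap R S) ≤
          N.comap (Algebra.TensorProduct.includeLeft : S →ₐ[R] S ⊗[R] S).toRingHom := by
        rw [Ideal.map_le_iff_le_comap]
        intro r hr
        have hr' : algebraMap R (S ⊗[R] S) r ∈ N := hr
        rw [← (Algebra.TensorProduct.includeLeft : S →ₐ[R] S ⊗[R] S).commutes] at hr'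
        exact hr'
      exact this hx
    have h3 : (1 : S) ⊗ₜ[R] s - s ⊗ₜ[R] (1 : S) = (1 : S) ⊗ₜ[R] d - d ⊗ₜ[R] (1 : S) := by
      have h4 : (1 : S) ⊗ₜ[R] (algebraMap F S a) = (algebraMap F S a) ⊗ₜ[R] (1 : S) := by
        rw [IsScalarTower.algebraMap_apply F R S, Algebra.algebraMap_eq_smul_one,
          TensorProduct.smul_tmul]
      rw [hd, TensorProduct.tmul_sub, TensorProduct.sub_tmul, h4]
      abel
    simp only [SetLike.mem_coe]
    rw [h3]
    exact N.sub_mem (h1 d ha) (h2 d ha)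
  have he0 : e = 0 := by
    have hu : IsUnit (1 - e) := by
      by_contra hnu
      obtain ⟨N, hNm, hmem⟩ := exists_max_ideal_of_mem_nonunits hnu
      have heN : e ∈ N := hN N hNm (hsp ▸ Ideal.mem_span_singleton_self e)
      exact hNm.ne_top ((Ideal.eq_top_iff_one _).mpr (by simpa using N.add_mem hmem heN))
    have : (1 - e) * e = 0 := by rw [sub_mul, one_mul, he.eq, sub_self]
    exact hu.mul_right_eq_zero.mp this
  intro s
  have hs : (1 : S) ⊗ₜ[R] s - s ⊗ₜ[R] (1 : S) ∈ KaehlerDifferential.ideal R S := by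
    rw [← KaehlerDifferential.span_range_eq_ideal]
    exact Ideal.subset_span ⟨s, rfl⟩
  rw [hsp, he0] at hs
  simpa [sub_eq_zero] using hs

theorem etale_of_jacobian {F S : Type*} [Field F] {m : ℕ} [CommRing S] [Algebra F S]
    [Algebra (MvPolynomial (Fin m) F) S] [IsScalarTower F (MvPolynomial (Fin m) F) S]
    (e : S ≃ₐ[F] MvPolynomial (Fin m) F)
    (hdet : IsUnit (Matrix.of fun i j : Fin m =>
      pderiv j (e (algebraMap (MvPolynomial (Fin m) F) S (X i)))).det) :
    Algebra.Etale (MvPolynomial (Fin m) F) S := by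
  set R := MvPolynomial (Fin m) F with hR
  let f : Fin m → MvPolynomial (Fin m) F := fun i => e (algebraMap R S (X i))
  let val : Fin m → S := fun j => e.symm (X j)
  let ι : MvPolynomial (Fin m) F →ₐ[F] MvPolynomial (Fin m) R :=
    MvPolynomial.mapAlgHom (Algebra.ofId F R)
  have hι : ∀ p, aeval (R := R) val (ι p) = e.symm p := by
    have : ((aeval (R := R) val).restrictScalars F).comp ι = (e.symm : _ →ₐ[F] S) := by
      ext i
      simp [ι, val]
    exact fun p => DFunLike.congr_fun this p
  let rel : Fin m → MvPolynomial (Fin m) R := fun i => C (X i) - ι (f i)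
  have hrel : ∀ i, aeval (R := R) val (rel i) = 0 := by
    intro i
    simp [rel, hι, f]
  let J : Ideal (MvPolynomial (Fin m) R) := Ideal.span (Set.range rel)
  have hred : ∀ p : MvPolynomial (Fin m) R, p - ι (e (aeval (R := R) val p)) ∈ J := by
    have hC : ∀ a : R, (C a : MvPolynomial (Fin m) R) - ι (e (algebraMap R S a)) ∈ J := by
      intro a
      have : ((Ideal.Quotient.mkₐ F J).comp (IsScalarTower.toAlgHom F R (MvPolynomial (Fin m) R))) =
          (Ideal.Quotient.mkₐ F J).comp (ι.comp ((e : S →ₐ[F] _).comp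
            (IsScalarTower.toAlgHom F R S))) := by
        apply MvPolynomial.algHom_ext
        intro i
        exact Ideal.Quotient.eq.mpr (Ideal.subset_span ⟨i, rfl⟩)
      exact Ideal.Quotient.eq.mp (DFunLike.congr_fun this a)
    intro p
    induction p using MvPolynomial.induction_on with
    | C a => simpa using hC a
    | add p q hp hq =>
      have := J.add_mem hp hq
      simp only [map_add]
      convert this using 1
      ring
    | mul_X p i hp =>
      have hX : ι (e (aeval (R := R) val (X i))) = X i := by simp [val, ι]
      rw [map_mul, map_mul, map_mul, hX, ← sub_mul]
      exact J.mul_mem_right _ hp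
  have hsurj : Function.Surjective (aeval (R := R) val) := fun s => ⟨ι (e s), by simp [hι]⟩
  let G : Algebra.Generators R S (Fin m) := Algebra.Generators.ofSurjective val hsurj
  have hker : Ideal.span (Set.range rel) = G.ker := by
    apply le_antisymm
    · rw [Ideal.span_le]
      rintro _ ⟨i, rfl⟩
      change algebraMap G.Ring S (rel i) = 0
      rw [Algebra.Generators.algebraMap_apply]
      exact hrel i
    · intro p hp
      have hp' : aeval (R := R) val p = 0 := by
        have : algebraMap G.Ring S p = 0 := hp
        rw [Algebra.Generators.algebraMap_apply] at this
        exact this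
      have := hred p
      rw [hp'] at this
      simpa using this
  let P : Algebra.PreSubmersivePresentation R S (Fin m) (Fin m) :=
    { G with
      relation := rel
      span_range_relation_eq_ker := hker
      map := id
      map_inj := Function.injective_id }
  have hjac : IsUnit P.jacobian := by
    rw [P.jacobian_eq_jacobiMatrix_det, RingHom.map_det]
    have : (algebraMap P.Ring S).mapMatrix P.jacobiMatrix =
        -((e.symm : MvPolynomial (Fin m) F →+* S).mapMatrix
          (Matrix.of fun i j : Fin m => pderiv j (f i))).transpose := by
      ext i j
      simp only [RingHom.mapMatrix_apply, Matrix.map_apply, Matrix.neg_apply,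
        Matrix.transpose_apply, Matrix.of_apply, P.jacobiMatrix_apply]
      rw [Algebra.Generators.algebraMap_apply]
      change aeval (R := R) val (pderiv i (C (X j) - ι (f j))) = - e.symm (pderiv i (f j))
      rw [← hι, map_sub, pderiv_C, zero_sub, map_neg]
      congr 2
      exact MvPolynomial.pderiv_map
    rw [this, Matrix.det_neg, Matrix.det_transpose, ← RingHom.map_det]
    exact ((isUnit_one.neg).pow _).mul (hdet.map _)
  let Q : Algebra.SubmersivePresentation R S (Fin m) (Fin m) := { P with jacobian_isUnit := hjac }
  have : Algebra.IsStandardSmoothOfRelativeDimension 0 R S :=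
    Q.isStandardSmoothOfRelativeDimension (by simp [Algebra.Presentation.dimension])
  infer_instance

/-- Strong version of the Jacobian statement: over an algebraically closed field, an
endomorphism `ϑ` of the polynomial ring whose Jacobian determinant is a nonzero constant
and which maps maximal ideals to maximal ideals is an automorphism. -/
theorem polynomial_endo_bijective_of_jacobian_and_maximal {F : Type*} [Field F]
    [IsAlgClosed F] {m : ℕ} (ϑ : MvPolynomial (Fin m) F →ₐ[F] MvPolynomial (Fin m) F)
    (c : F) (hc : c ≠ 0)
    (hdet : (Matrix.of fun i j : Fin m => pderiv j (ϑ (X i))).det = C c)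
    (hmax : ∀ M : Ideal (MvPolynomial (Fin m) F), M.IsMaximal →
      (Ideal.map ϑ.toRingHom M).IsMaximal) :
    Function.Bijective ϑ := by
  let alg : Algebra (MvPolynomial (Fin m) F) (MvPolynomial (Fin m) F) := ϑ.toRingHom.toAlgebra
  have tower : @IsScalarTower F (MvPolynomial (Fin m) F) (MvPolynomial (Fin m) F) _
      alg.toSMul _ :=
    @IsScalarTower.of_algebraMap_eq F (MvPolynomial (Fin m) F) (MvPolynomial (Fin m) F) _ _ _ _
      alg _ (fun x => (ϑ.commutes x).symm)
  have het := @etale_of_jacobian F (MvPolynomial (Fin m) F) _ m _ _ alg tower AlgEquiv.refl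
    (by
      change IsUnit (Matrix.of fun i j : Fin m => pderiv j (ϑ (X i))).det
      rw [hdet]
      exact (isUnit_iff_ne_zero.mpr hc).map C)
  exact @bijective_of_etale_of_maximal F (MvPolynomial (Fin m) F) (MvPolynomial (Fin m) F) _ _ _ _
    _ _ alg tower inferInstance het hmax
end

section
/- Let F be an algebraically closed field of characteristic ≠ 2 and R = F[x₁,…,x_m] ⊗ Λ(ξ₁,…,ξ_n). Let φ : R → R be a parity-preserving F-algebra endomorphism with φ(x_i) = f_i and φ(ξ_k) = q_k. Assume: (a) det(∂f_i/∂x_j) ∈ F^× + J and det(∂q_k/∂ξ_l) ∈ F^× + J (super-Jacobian condition), and (b) for every maximal Z₂-homogeneous ideal I of R, the ideal generated by φ(I) is again a maximal Z₂-homogeneous ideal. Then φ is an automorphism of R. -/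
open TensorProduct MvPolynomial

noncomputable section

variable (F : Type*) [Field F] (m n : ℕ)

abbrev PolyA := MvPolynomial (Fin m) F
abbrev ExtA := ExteriorAlgebra F (Fin n → F)
abbrev SAlg := PolyA F m ⊗[F] ExtA F n

/-- even coordinate x_i -/
def xg (i : Fin m) : SAlg F m n := (X i) ⊗ₜ 1

/-- odd coordinate ξ_k -/
def xig (k : Fin n) : SAlg F m n := 1 ⊗ₜ (ExteriorAlgebra.ι F (Pi.single k 1))

/-- ideal J generated by the odd coordinates -/
def Jg : Ideal (SAlg F m n) := Ideal.span (Set.range (xig F m n))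

/-- the ideal J² -/
def Jsq : Ideal (SAlg F m n) :=
  Ideal.span {r | ∃ u ∈ Jg F m n, ∃ v ∈ Jg F m n, r = u * v}

/-- the parity involution, identity on polynomials and negation of ξ's -/
def parityInvol : SAlg F m n →ₐ[F] SAlg F m n :=
  Algebra.TensorProduct.map (AlgHom.id F (PolyA F m)) (ExteriorAlgebra.map (-LinearMap.id))

/-- the even part, as the subalgebra fixed by the parity involution -/
def evenA : Subalgebra F (SAlg F m n) :=
  AlgHom.equalizer (parityInvol F m n) (AlgHom.id F (SAlg F m n))

/-- the odd part, the (-1)-eigenspace of the parity involution -/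
def oddP : Submodule F (SAlg F m n) :=
  LinearMap.ker ((parityInvol F m n).toLinearMap + LinearMap.id)

/-- a Z₂-homogeneous ideal -/
def IsHomog (I : Ideal (SAlg F m n)) : Prop :=
  ∀ a ∈ evenA F m n, ∀ b ∈ oddP F m n, a + b ∈ I → a ∈ I ∧ b ∈ I

/-- a maximal Z₂-homogeneous ideal -/
def IsMaxHomog (I : Ideal (SAlg F m n)) : Prop :=
  IsHomog F m n I ∧ I ≠ ⊤ ∧ ∀ I', IsHomog F m n I' → I' ≠ ⊤ → I ≤ I' → I' = I

/-- the canonical projection R → R/J ≅ F[x₁,…,x_m] -/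
def projP : SAlg F m n →ₐ[F] PolyA F m :=
  Algebra.TensorProduct.lift (AlgHom.id F (PolyA F m))
    ((Algebra.ofId F (PolyA F m)).comp ExteriorAlgebra.algebraMapInv)
    (fun _ _ => Commute.all _ _)

/-- determinant of a square matrix over a possibly noncommutative ring -/
def sdet {R : Type*} [Ring R] {N : ℕ} (M : Matrix (Fin N) (Fin N) R) : R :=
  ∑ σ : Equiv.Perm (Fin N),
    (Equiv.Perm.sign σ : ℤ) • ((List.finRange N).map fun i => M (σ i) i).prod

/-- the even super derivation ∂/∂x_j of R -/
def Dx (j : Fin m) : SAlg F m n →ₗ[F] SAlg F m n :=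
  TensorProduct.map (pderiv j).toLinearMap LinearMap.id

/-- the odd super derivation ∂/∂ξ_l of R -/
def Dxi (l : Fin n) : SAlg F m n →ₗ[F] SAlg F m n :=
  TensorProduct.map LinearMap.id
    (CliffordAlgebra.contractLeft (Q := (0 : QuadraticForm F (Fin n → F))) (LinearMap.proj l))

end


theorem core_epi {F A B : Type*} [Field F] [IsAlgClosed F] [CommRing A] [CommRing B]
    [Algebra F A] [Algebra F B] [Algebra A B] [IsScalarTower F A B] [Algebra.FiniteType F B]
    [Algebra.Etale A B]
    (h : ∀ I : Ideal A, I.IsMaximal → (I.map (algebraMap A B)).IsMaximal) :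
    Function.Surjective (algebraMap A B) := by
  have hff : Module.FaithfullyFlat A B := by
    refine ⟨fun I hI => ?_⟩
    rw [Ideal.smul_top_eq_map]
    exact (Submodule.restrictScalars_eq_top_iff _ _ _).ne.mpr (h I hI).ne_top
  apply Module.FaithfullyFlat.surjective_of_tensorProduct (S := B)
  obtain ⟨t, ht, ht1⟩ := (Algebra.FormallyUnramified.iff_exists_tensorProduct (R := A) (S := B)).1
    inferInstance
  have hu : IsUnit t := by
    by_contra hn
    obtain ⟨M, hM, htM⟩ := exists_max_ideal_of_mem_nonunits hn
    let : Field (B ⊗[A] B ⧸ M) := Ideal.Quotient.field M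
    have : Algebra.FiniteType F (B ⊗[A] B) := 
      Algebra.FiniteType.trans (S := B) inferInstance inferInstance
    have : Algebra.FiniteType F (B ⊗[A] B ⧸ M) := inferInstance
    have : Module.Finite F (B ⊗[A] B ⧸ M) := finite_of_finite_type_of_isJacobsonRing _ _
    have hb : Function.Bijective (algebraMap F (B ⊗[A] B ⧸ M)) :=
      IsAlgClosed.algebraMap_bijective_of_isIntegral
    let g : B ⊗[A] B →ₐ[F] (B ⊗[A] B ⧸ M) := Ideal.Quotient.mkₐ F M
    let g1 : B →ₐ[F] (B ⊗[A] B ⧸ M) := g.comp Algebra.TensorProduct.includeLeft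
    let g2 : B →ₐ[F] (B ⊗[A] B ⧸ M) :=
      g.comp ((Algebra.TensorProduct.includeRight : B →ₐ[A] B ⊗[A] B).restrictScalars F)
    let gA : A →ₐ[F] (B ⊗[A] B ⧸ M) := g1.comp (IsScalarTower.toAlgHom F A B)
    have hgA : ∀ a, g2 (algebraMap A B a) = g1 (algebraMap A B a) := by
      intro a
      simp only [g1, g2, AlgHom.comp_apply]
      congr 1
      simp [Algebra.algebraMap_eq_smul_one]
      rw [TensorProduct.smul_tmul']
    have hs : ∀ g' : B →ₐ[F] (B ⊗[A] B ⧸ M), Function.Surjective g' := by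
      intro g' x
      obtain ⟨c, rfl⟩ := hb.2 x
      exact ⟨algebraMap F B c, by simp⟩
    have hsA : Function.Surjective gA := by
      intro x
      obtain ⟨c, rfl⟩ := hb.2 x
      exact ⟨algebraMap F A c, by simp [gA]⟩
    have hmA : (RingHom.ker gA).IsMaximal := RingHom.ker_isMaximal_of_surjective gA.toRingHom hsA
    have hmm := h _ hmA
    have e1 : (RingHom.ker gA).map (algebraMap A B) = RingHom.ker g1 := by
      apply hmm.eq_of_le (RingHom.ker_ne_top _)
      rw [Ideal.map_le_iff_le_comap]
      intro a ha
      exact ha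
    have e2 : (RingHom.ker gA).map (algebraMap A B) = RingHom.ker g2 := by
      apply hmm.eq_of_le (RingHom.ker_ne_top _)
      rw [Ideal.map_le_iff_le_comap]
      intro a ha
      have : g1 (algebraMap A B a) = 0 := ha
      rw [Ideal.mem_comap, RingHom.mem_ker, hgA, this]
    have e12 : ∀ b, g1 b = g2 b := by
      intro b
      obtain ⟨c, hc⟩ := hb.2 (g1 b)
      have : b - algebraMap F B c ∈ RingHom.ker g1 := by
        rw [RingHom.mem_ker, map_sub, AlgHom.commutes, hc, sub_self]
      rw [← e1, e2, RingHom.mem_ker, map_sub, AlgHom.commutes, sub_eq_zero] at this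
      rw [this, hc]
    have hfac : ∀ x : B ⊗[A] B, g x = g1 (Algebra.TensorProduct.lmul' A x) := by
      intro x
      induction x with
      | zero => simp
      | add x y hx hy => simp only [map_add, hx, hy]
      | tmul x y =>
        have : x ⊗ₜ[A] y = (x ⊗ₜ[A] 1) * (1 ⊗ₜ[A] y) := by simp
        rw [this, map_mul, map_mul, map_mul]
        simp only [Algebra.TensorProduct.lmul'_apply_tmul, mul_one, one_mul]
        rw [e12 y]
        rfl
    have h1 := hfac t
    rw [ht1, map_one] at h1
    have h0 : g t = 0 := Ideal.Quotient.eq_zero_iff_mem.2 htM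
    rw [h0] at h1
    exact zero_ne_one h1
  intro x
  have key : ∀ s : B, (1 : B) ⊗ₜ[A] s = s ⊗ₜ[A] 1 := fun s =>
    sub_eq_zero.1 ((hu.mul_left_eq_zero).1 (ht s))
  induction x with
  | zero => exact ⟨0, map_zero _⟩
  | add x y hx hy =>
    obtain ⟨a, rfl⟩ := hx
    obtain ⟨b, rfl⟩ := hy
    exact ⟨a + b, map_add _ _ _⟩
  | tmul x y =>
    refine ⟨x * y, ?_⟩
    have : x ⊗ₜ[A] y = (x ⊗ₜ[A] 1) * (1 ⊗ₜ[A] y) := by simp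
    rw [this, key, Algebra.TensorProduct.algebraMap_apply]
    simp

theorem etale_of_jac {F B : Type*} [Field F] {m : ℕ} [CommRing B]
    [Algebra F B] [Algebra (MvPolynomial (Fin m) F) B]
    [IsScalarTower F (MvPolynomial (Fin m) F) B]
    (φ : MvPolynomial (Fin m) F →ₐ[F] MvPolynomial (Fin m) F)
    (e : MvPolynomial (Fin m) F ≃ₐ[F] B)
    (he : ∀ a, algebraMap (MvPolynomial (Fin m) F) B a = e (φ a))
    (hdet : IsUnit (Matrix.of fun i j => pderiv j (φ (X i)) : Matrix (Fin m) (Fin m) _).det) :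
    Algebra.Etale (MvPolynomial (Fin m) F) B := by
  let r : Fin m → MvPolynomial (Fin m) (MvPolynomial (Fin m) F) := fun j => map C (φ (X j)) - C (X j)
  let v : Fin m → B := fun i => e (X i)
  have hmapC : ∀ p : (MvPolynomial (Fin m) F), aeval v (map (C : F →+* (MvPolynomial (Fin m) F)) p) = e p := by
    intro p
    have : ((aeval v : MvPolynomial (Fin m) (MvPolynomial (Fin m) F) →ₐ[(MvPolynomial (Fin m) F)] B).toRingHom.comp (map (C : F →+* (MvPolynomial (Fin m) F)))) =
        (e : (MvPolynomial (Fin m) F) →+* B) := by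
      apply MvPolynomial.ringHom_ext
      · intro c
        simp [he]
      · intro i
        simp [v]
    exact DFunLike.congr_fun this p
  have hsurj : Function.Surjective (aeval v : MvPolynomial (Fin m) (MvPolynomial (Fin m) F) →ₐ[(MvPolynomial (Fin m) F)] B) := by
    intro b
    exact ⟨map C (e.symm b), by rw [hmapC]; simp⟩
  have hker : Ideal.span (Set.range r) =
      RingHom.ker (aeval v : MvPolynomial (Fin m) (MvPolynomial (Fin m) F) →ₐ[(MvPolynomial (Fin m) F)] B).toRingHom := by
    apply le_antisymm
    · rw [Ideal.span_le]
      rintro _ ⟨j, rfl⟩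
      simp only [r, SetLike.mem_coe, RingHom.mem_ker]
      simp [hmapC, he]
    · let π := Ideal.Quotient.mk (Ideal.span (Set.range r))
      let ψ : B →+* _ := π.comp ((map (C : F →+* (MvPolynomial (Fin m) F))).comp (e.symm : B →+* (MvPolynomial (Fin m) F)))
      have hψ : ψ.comp (aeval v : MvPolynomial (Fin m) (MvPolynomial (Fin m) F) →ₐ[(MvPolynomial (Fin m) F)] B).toRingHom = π := by
        apply MvPolynomial.ringHom_ext
        · intro a
          have h2 : ((ψ.comp (aeval v : MvPolynomial (Fin m) (MvPolynomial (Fin m) F) →ₐ[(MvPolynomial (Fin m) F)] B).toRingHom).comp C) =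
              π.comp C := by
            apply MvPolynomial.ringHom_ext
            · intro c
              simp [ψ, he]
            · intro j
              simp [ψ, he]
              apply Ideal.Quotient.eq.2
              exact Ideal.subset_span ⟨j, rfl⟩
          exact DFunLike.congr_fun h2 a
        · intro i
          simp [ψ, v]
      intro p hp
      have : π p = 0 := by
        rw [← hψ, RingHom.comp_apply, (RingHom.mem_ker).1 hp, map_zero]
      exact Ideal.Quotient.eq_zero_iff_mem.1 this
  let G := Algebra.Generators.ofAlgHom (aeval v : MvPolynomial (Fin m) (MvPolynomial (Fin m) F) →ₐ[(MvPolynomial (Fin m) F)] B) hsurj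
  have hGv : G.val = v := by
    funext i
    simp [G, Algebra.Generators.ofAlgHom, Algebra.Generators.ofSurjective]
  let P : Algebra.PreSubmersivePresentation (MvPolynomial (Fin m) F) B (Fin m) (Fin m) :=
    { toGenerators := G
      relation := r
      span_range_relation_eq_ker := by
        rw [Algebra.Generators.ker_ofAlgHom]; exact hker
      map := id
      map_inj := fun _ _ h => h }
  let S : Algebra.SubmersivePresentation (MvPolynomial (Fin m) F) B (Fin m) (Fin m) :=
    { toPreSubmersivePresentation := P
      jacobian_isUnit := by
        rw [Algebra.PreSubmersivePresentation.jacobian_eq_jacobiMatrix_det]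
        have hM : (algebraMap P.Ring B) P.jacobiMatrix.det =
          e (Matrix.of fun i j => pderiv j (φ (X i)) : Matrix (Fin m) (Fin m) _).det := by
          rw [RingHom.map_det, AlgEquiv.map_det, ← Matrix.det_transpose]
          congr 1
          ext i j
          simp only [RingHom.mapMatrix_apply, Matrix.transpose_apply, Matrix.map_apply,
            AlgEquiv.mapMatrix_apply, Matrix.of_apply]
          rw [Algebra.PreSubmersivePresentation.jacobiMatrix_apply]
          rw [Algebra.Generators.algebraMap_apply]
          change aeval G.val (pderiv j (r i)) = _
          rw [hGv, ← hmapC]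
          simp [r, pderiv_map]
        rw [hM]
        exact hdet.map e }
  have : Algebra.IsStandardSmoothOfRelativeDimension 0 (MvPolynomial (Fin m) F) B :=
    S.isStandardSmoothOfRelativeDimension (by simp [Algebra.Presentation.dimension])
  exact Algebra.Etale.iff_isStandardSmoothOfRelativeDimension_zero.2 this

def PolyCopy (F : Type*) [Field F] (m : ℕ) := MvPolynomial (Fin m) F

noncomputable instance (F : Type*) [Field F] (m : ℕ) : CommRing (PolyCopy F m) :=
  inferInstanceAs (CommRing (MvPolynomial (Fin m) F))

noncomputable instance (F : Type*) [Field F] (m : ℕ) : Algebra F (PolyCopy F m) :=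
  inferInstanceAs (Algebra F (MvPolynomial (Fin m) F))

theorem poly_surj {F : Type*} [Field F] [IsAlgClosed F] {m : ℕ}
    (φ : MvPolynomial (Fin m) F →ₐ[F] MvPolynomial (Fin m) F)
    (hdet : IsUnit (Matrix.of fun i j => pderiv j (φ (X i)) : Matrix (Fin m) (Fin m) _).det)
    (h : ∀ I : Ideal (MvPolynomial (Fin m) F), I.IsMaximal → (I.map φ.toRingHom).IsMaximal) :
    Function.Surjective φ := by
  let e : MvPolynomial (Fin m) F ≃ₐ[F] PolyCopy F m :=
    (AlgEquiv.refl : MvPolynomial (Fin m) F ≃ₐ[F] MvPolynomial (Fin m) F)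
  let : Algebra (MvPolynomial (Fin m) F) (PolyCopy F m) :=
    ((e : MvPolynomial (Fin m) F →+* PolyCopy F m).comp φ.toRingHom).toAlgebra
  have he : ∀ a, algebraMap (MvPolynomial (Fin m) F) (PolyCopy F m) a = e (φ a) := fun a => rfl
  have : IsScalarTower F (MvPolynomial (Fin m) F) (PolyCopy F m) :=
    IsScalarTower.of_algebraMap_eq fun c => by rw [he]; simp
  have := etale_of_jac φ e he hdet
  have : Algebra.FiniteType F (PolyCopy F m) :=
    Algebra.FiniteType.equiv (inferInstance : Algebra.FiniteType F (MvPolynomial (Fin m) F)) e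
  have := core_epi (F := F) (A := MvPolynomial (Fin m) F) (B := PolyCopy F m) (fun I hI => h I hI)
  intro x
  obtain ⟨a, ha⟩ := this (e x)
  exact ⟨a, e.injective ha⟩

lemma sm_le_left {F R : Type*} [CommSemiring F] [Semiring R] [Algebra F R]
    {M N P : Submodule F R} (h : M ≤ N) : M * P ≤ N * P := mul_le_mul' h le_rfl

lemma sm_le_right {F R : Type*} [CommSemiring F] [Semiring R] [Algebra F R]
    {M N P : Submodule F R} (h : M ≤ N) : P * M ≤ P * N := mul_le_mul' le_rfl h

section LPart

variable (F : Type*) [Field F] (n : ℕ)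

/-- span of the generators in the exterior algebra -/
def VL : Submodule F (ExtA F n) := LinearMap.range (ExteriorAlgebra.ι F)

def NL : Submodule F (ExtA F n) :=
  LinearMap.ker (ExteriorAlgebra.algebraMapInv (R := F) (M := Fin n → F)).toLinearMap

lemma mem_NL {r : ExtA F n} : r ∈ NL F n ↔ ExteriorAlgebra.algebraMapInv r = 0 := Iff.rfl

lemma algInv_ι (v : Fin n → F) :
    ExteriorAlgebra.algebraMapInv (ExteriorAlgebra.ι F v) = 0 := by
  simp [ExteriorAlgebra.algebraMapInv]

lemma sub_mem_L (l : ExtA F n) :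
    l - algebraMap F _ (ExteriorAlgebra.algebraMapInv l) ∈ (⊤ : Submodule F (ExtA F n)) * VL F n := by
  have hleft : ∀ a b : ExtA F n, b ∈ (⊤ : Submodule F (ExtA F n)) * VL F n →
      a * b ∈ (⊤ : Submodule F (ExtA F n)) * VL F n := by
    intro a b hb
    have := Submodule.mul_mem_mul (Submodule.mem_top (R := F) (x := a)) hb
    rw [← mul_assoc] at this
    exact sm_le_left (le_top) this
  induction l using ExteriorAlgebra.induction with
  | algebraMap c => simp
  | ι v =>
    rw [algInv_ι]
    have := Submodule.mul_mem_mul (Submodule.mem_top (R := F) (x := (1 : ExtA F n)))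
      (show ExteriorAlgebra.ι F v ∈ VL F n from ⟨v, rfl⟩)
    simpa using this
  | mul a b ha hb =>
    have : a * b - algebraMap F _ (ExteriorAlgebra.algebraMapInv (a * b)) =
      a * (b - algebraMap F _ (ExteriorAlgebra.algebraMapInv b)) +
      algebraMap F _ (ExteriorAlgebra.algebraMapInv b) *
        (a - algebraMap F _ (ExteriorAlgebra.algebraMapInv a)) := by
      rw [map_mul, map_mul, mul_sub, mul_sub,
        Algebra.commutes (ExteriorAlgebra.algebraMapInv b) a,
        Algebra.commutes (ExteriorAlgebra.algebraMapInv b)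
          (algebraMap F _ (ExteriorAlgebra.algebraMapInv a))]
      abel
    rw [this]
    exact add_mem (hleft _ _ hb) (hleft _ _ ha)
  | add a b ha hb =>
    have := add_mem ha hb
    rw [map_add, map_add]
    convert this using 1
    abel

lemma VL_pow : VL F n ^ (n+1) = ⊥ := by
  rw [eq_bot_iff, VL]
  change (⋀[F]^(n+1) (Fin n → F)) ≤ ⊥
  rw [← ExteriorAlgebra.ιMulti_span_fixedDegree, Submodule.span_le]
  rintro _ ⟨v, rfl⟩
  simp only [SetLike.mem_coe, Submodule.mem_bot]
  apply AlternatingMap.map_linearDependent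
  intro h
  have := h.fintype_card_le_finrank
  simp at this

lemma contract_L (l : ExtA F n) :
    l - algebraMap F _ (ExteriorAlgebra.algebraMapInv l) -
      ∑ k : Fin n, algebraMap F (ExtA F n) (ExteriorAlgebra.algebraMapInv
        (CliffordAlgebra.contractLeft (Q := (0 : QuadraticForm F (Fin n → F)))
          (LinearMap.proj k) l)) * ExteriorAlgebra.ι F (Pi.single k 1) ∈ NL F n ^ 2 := by
  induction l using CliffordAlgebra.left_induction with
  | algebraMap c => 
    simp [CliffordAlgebra.contractLeft_algebraMap]
  | add a b ha hb =>
    have := add_mem ha hb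
    simp only [map_add, add_mul, Finset.sum_add_distrib]
    convert this using 1
    abel
  | ι_mul x v _ =>
    simp only [CliffordAlgebra.contractLeft_ι_mul]
    have hv : ∀ v, (CliffordAlgebra.ι (0 : QuadraticForm F (Fin n → F))) v =
      ExteriorAlgebra.ι F v := fun _ => rfl
    simp only [hv]
    simp only [map_sub, map_smul, map_mul, algInv_ι, zero_mul, map_zero, sub_zero]
    have hs : ∑ k : Fin n, (algebraMap F (ExtA F n)) ((LinearMap.proj k : (Fin n → F) →ₗ[F] F) v •
        ExteriorAlgebra.algebraMapInv x) * ExteriorAlgebra.ι F (Pi.single k 1) =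
        ExteriorAlgebra.ι F v * algebraMap F _ (ExteriorAlgebra.algebraMapInv x) := by
      conv_rhs => rw [pi_eq_sum_univ' v]
      rw [map_sum, Finset.sum_mul]
      apply Finset.sum_congr rfl
      intro k _
      rw [← Algebra.commutes, map_smul (ExteriorAlgebra.ι F), ← Algebra.smul_def, ← Algebra.smul_def, smul_eq_mul,
        mul_comm, mul_smul]
      rfl
    erw [hs]
    rw [← mul_sub, pow_two]
    apply Submodule.mul_mem_mul
    · rw [mem_NL, algInv_ι]
    · rw [mem_NL, map_sub, AlgHom.commutes]
      simp

end LPart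

section GenPart

variable {F : Type*} [Field F] {n : ℕ} {R A : Type*} [Ring R] [Algebra F R] [CommRing A]
  [Algebra F A] 

/-- abstract data of a superalgebra -/
structure SData (pr : R →ₐ[F] A) (inc : A →ₐ[F] R) (incL : ExtA F n →ₐ[F] R)
    (D : Fin n → R →ₗ[F] R) : Prop where
  hpi : ∀ a, pr (inc a) = a
  hpl : ∀ l, pr (incL l) = algebraMap F A (ExteriorAlgebra.algebraMapInv l)
  hind : ∀ P : R → Prop, (∀ a l, P (inc a * incL l)) → (∀ x y, P x → P y → P (x + y)) → ∀ r, P r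
  hD : ∀ k a l, D k (inc a * incL l) = inc a *
    incL (CliffordAlgebra.contractLeft (Q := (0 : QuadraticForm F (Fin n → F)))
          (LinearMap.proj k) l)

variable {pr : R →ₐ[F] A} {inc : A →ₐ[F] R} {incL : ExtA F n →ₐ[F] R}
    {D : Fin n → R →ₗ[F] R} 

def NK (pr : R →ₐ[F] A) : Submodule F R := LinearMap.ker pr.toLinearMap

def VK (incL : ExtA F n →ₐ[F] R) : Submodule F R := (VL F n).map incL.toLinearMap

lemma mem_NK {r : R} : r ∈ NK pr ↔ pr r = 0 := Iff.rfl

lemma top_mul_NK : (⊤ : Submodule F R) * NK pr ≤ NK pr := by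
  rw [Submodule.mul_le]
  intro a _ b hb
  rw [mem_NK] at *
  rw [map_mul, hb, mul_zero]

lemma NK_mul_top : NK pr * (⊤ : Submodule F R) ≤ NK pr := by
  rw [Submodule.mul_le]
  intro a ha b _
  rw [mem_NK] at *
  rw [map_mul, ha, zero_mul]

lemma sub_mem_R (S : SData pr inc incL D) (r : R) :
    r - inc (pr r) ∈ (⊤ : Submodule F R) * VK incL := by
  refine S.hind (fun r => r - inc (pr r) ∈ (⊤ : Submodule F R) * VK incL) ?_ ?_ r
  · intro p l
    have h1 : inc p * incL l - inc (pr (inc p * incL l)) = inc p *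
        incL (l - algebraMap F _ (ExteriorAlgebra.algebraMapInv l)) := by
      rw [map_mul pr, S.hpi, S.hpl, map_sub, mul_sub, map_mul, AlgHom.commutes, AlgHom.commutes]
    rw [h1]
    have h2 : incL (l - algebraMap F _ (ExteriorAlgebra.algebraMapInv l)) ∈
        (⊤ : Submodule F R) * VK incL := by
      have := Submodule.mem_map_of_mem (f := incL.toLinearMap) (sub_mem_L F n l)
      rw [Submodule.map_mul] at this
      exact sm_le_left le_top this
    have := Submodule.mul_mem_mul (Submodule.mem_top (R := F) (x := inc p)) h2
    rw [← mul_assoc] at this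
    exact sm_le_left le_top this
  · intro a b ha hb
    have := add_mem ha hb
    rw [map_add, map_add]
    convert this using 1
    abel

lemma VK_le (S : SData pr inc incL D) : VK incL ≤ NK pr := by
  rintro _ ⟨_, ⟨v, rfl⟩, rfl⟩
  change pr (incL _) = 0
  rw [S.hpl, algInv_ι, map_zero]

lemma NK_eq (S : SData pr inc incL D) : NK pr = (⊤ : Submodule F R) * VK incL := by
  apply le_antisymm
  · intro r hr
    have := sub_mem_R S r
    rw [mem_NK.1 hr] at this
    simpa using this
  · exact (sm_le_right (VK_le S)).trans top_mul_NK

lemma VK_comm (S : SData pr inc incL D) : VK incL * (⊤ : Submodule F R) ≤ ⊤ * VK incL := by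
  rw [← NK_eq S]
  exact (sm_le_left (VK_le S)).trans NK_mul_top

lemma VK_pow_comm (S : SData pr inc incL D) (k : ℕ) :
    VK incL ^ k * (⊤ : Submodule F R) ≤ ⊤ * VK incL ^ k := by
  induction k with
  | zero => simp
  | succ k ih =>
    calc VK incL ^ (k+1) * (⊤ : Submodule F R)
        = VK incL ^ k * (VK incL * ⊤) := by rw [pow_succ, mul_assoc]
      _ ≤ VK incL ^ k * (⊤ * VK incL) := sm_le_right (VK_comm S)
      _ = (VK incL ^ k * ⊤) * VK incL := by rw [mul_assoc]
      _ ≤ (⊤ * VK incL ^ k) * VK incL := sm_le_left ih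
      _ = ⊤ * VK incL ^ (k+1) := by rw [pow_succ, mul_assoc]

lemma NK_pow_le (S : SData pr inc incL D) (k : ℕ) : NK pr ^ k ≤ ⊤ * VK incL ^ k := by
  induction k with
  | zero => 
    rw [pow_zero, pow_zero, mul_one]
    exact le_top
  | succ k ih =>
    calc NK pr ^ (k+1) = NK pr ^ k * (⊤ * VK incL) := by rw [pow_succ, ← NK_eq S]
      _ ≤ (⊤ * VK incL ^ k) * (⊤ * VK incL) := sm_le_left ih
      _ = ⊤ * (VK incL ^ k * ⊤) * VK incL := by simp only [mul_assoc]
      _ ≤ ⊤ * (⊤ * VK incL ^ k) * VK incL :=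
        sm_le_left (sm_le_right (VK_pow_comm S k))
      _ = (⊤ * ⊤) * VK incL ^ (k+1) := by rw [pow_succ]; simp only [mul_assoc]
      _ ≤ ⊤ * VK incL ^ (k+1) := sm_le_left le_top

lemma NK_pow (S : SData pr inc incL D) : NK pr ^ (n+1) = ⊥ := by
  rw [eq_bot_iff]
  refine (NK_pow_le S (n+1)).trans ?_
  rw [VK, ← Submodule.map_pow, VL_pow, Submodule.map_bot, Submodule.mul_bot]

lemma isUnit_of_proj (S : SData pr inc incL D) {r : R} (h : pr r = 1) : IsUnit r := by
  have h1 : 1 - r ∈ NK pr := by rw [mem_NK, map_sub, map_one, h, sub_self]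
  have h2 := Submodule.pow_mem_pow _ h1 (n+1)
  rw [NK_pow S, Submodule.mem_bot] at h2
  have := IsNilpotent.isUnit_one_sub ⟨n+1, h2⟩
  simpa using this

lemma inclL_NL (S : SData pr inc incL D) : (NL F n).map incL.toLinearMap ≤ NK pr := by
  rintro _ ⟨l, hl, rfl⟩
  change pr (incL _) = 0
  rw [S.hpl, (mem_NL F n).1 hl, map_zero]

lemma contract_R (S : SData pr inc incL D) (r : R) :
    r - inc (pr r) -
      ∑ k : Fin n, inc (pr (D k r)) * incL (ExteriorAlgebra.ι F (Pi.single k 1)) ∈ NK pr ^ 2 := by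
  refine S.hind (fun r => r - inc (pr r) -
      ∑ k : Fin n, inc (pr (D k r)) * incL (ExteriorAlgebra.ι F (Pi.single k 1)) ∈ NK pr ^ 2) ?_ ?_ r
  · intro p l
    have h1 : inc p * incL l - inc (pr (inc p * incL l)) -
      ∑ k : Fin n, inc (pr (D k (inc p * incL l))) * incL (ExteriorAlgebra.ι F (Pi.single k 1)) =
      inc p * incL (l - algebraMap F _ (ExteriorAlgebra.algebraMapInv l) -
      ∑ k : Fin n, algebraMap F (ExtA F n) (ExteriorAlgebra.algebraMapInv
        (CliffordAlgebra.contractLeft (Q := (0 : QuadraticForm F (Fin n → F)))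
          (LinearMap.proj k) l)) * ExteriorAlgebra.ι F (Pi.single k 1)) := by
      rw [map_sub, map_sub, mul_sub, mul_sub, map_mul pr, S.hpi, S.hpl, map_mul, map_sum,
        Finset.mul_sum]
      congr 1
      · rw [AlgHom.commutes, AlgHom.commutes]
      · apply Finset.sum_congr rfl
        intro k _
        rw [S.hD, map_mul pr, S.hpi, S.hpl, map_mul, map_mul,
          AlgHom.commutes, AlgHom.commutes, mul_assoc]
    rw [h1]
    have h2 := Submodule.mem_map_of_mem (f := incL.toLinearMap) (contract_L F n l)
    rw [Submodule.map_pow] at h2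
    have h3 := pow_le_pow_left' (inclL_NL S) 2 h2
    have := Submodule.mul_mem_mul (Submodule.mem_top (R := F) (x := inc p)) h3
    rw [pow_two, ← mul_assoc] at this
    rw [pow_two]
    exact sm_le_left top_mul_NK this
  · intro a b ha hb
    have := add_mem ha hb
    simp only [map_add, add_mul, Finset.sum_add_distrib]
    convert this using 1
    abel

/-- The Nakayama-type surjectivity argument. -/
lemma gen_surj (S : SData pr inc incL D) (φ : R →ₐ[F] R) (ψ : A →ₐ[F] A)
    (hψ : ∀ r, pr (φ r) = ψ (pr r)) (hs : Function.Surjective ψ)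
    (hM : IsUnit (Matrix.of fun k l =>
      pr (D l (φ (incL (ExteriorAlgebra.ι F (Pi.single k 1)))))).det) :
    Function.Surjective φ := by
  set xi : Fin n → R := fun k => incL (ExteriorAlgebra.ι F (Pi.single k 1)) with hxi
  have hpxi : ∀ k, pr (xi k) = 0 := fun k => by rw [hxi]; simp only; rw [S.hpl, algInv_ι, map_zero]
  set M : Matrix (Fin n) (Fin n) A := Matrix.of fun k l => pr (D l (φ (xi k))) with hMdef
  let T : Submodule F R := LinearMap.range φ.toLinearMap ⊓ NK pr
  have hTmul : ∀ a ∈ T, ∀ b ∈ T, a * b ∈ T := by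
    rintro _ ⟨⟨a, rfl⟩, ha⟩ _ ⟨⟨b, rfl⟩, hb⟩
    refine ⟨⟨a * b, by simp⟩, ?_⟩
    have ha' : pr (φ a) = 0 := ha
    change pr (φ a * φ b) = 0
    rw [map_mul, ha', zero_mul]
  have hN2 : NK pr ^ 2 ≤ NK pr := by
    rw [pow_two]; exact (sm_le_right le_top).trans NK_mul_top
  have htopN2 : (⊤ : Submodule F R) * NK pr ^ 2 ≤ NK pr ^ 2 := by
    rw [pow_two, ← mul_assoc]; exact sm_le_left top_mul_NK
  -- decompose r
  have hdec : ∀ r : R, ∃ d : A, r - φ (inc d) ∈ NK pr := by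
    intro r
    obtain ⟨d, hd⟩ := hs (pr r)
    refine ⟨d, ?_⟩
    rw [mem_NK, map_sub, hψ, S.hpi, hd, sub_self]
  -- xi_l in T + N^2
  have hincN : ∀ (a : A) (d : A), ψ d = a → inc a - φ (inc d) ∈ NK pr := by
    intro a d h
    rw [mem_NK, map_sub, hψ, S.hpi, S.hpi, h, sub_self]
  have hxiN : ∀ k, xi k ∈ NK pr := fun k => mem_NK.2 (hpxi k)
  have hφxiN : ∀ k, φ (xi k) ∈ NK pr := fun k => by rw [mem_NK, hψ, hpxi, map_zero]
  have hφxi : ∀ k, φ (xi k) - ∑ l, inc (M k l) * xi l ∈ NK pr ^ 2 := by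
    intro k
    have := contract_R S (φ (xi k))
    rw [mem_NK.1 (hφxiN k), map_zero, sub_zero] at this
    exact this
  have hxiT : ∀ l, xi l ∈ T ⊔ NK pr ^ 2 := by
    intro l
    choose d hd using fun k => hs (M⁻¹ l k)
    have e1 : xi l = ∑ k, inc (M⁻¹ l k) * ∑ j, inc (M k j) * xi j := by
      have : M⁻¹ * M = 1 := Matrix.nonsing_inv_mul _ hM
      simp only [Finset.mul_sum]
      rw [Finset.sum_comm]
      have h2 : ∀ j, ∑ k, inc (M⁻¹ l k) * (inc (M k j) * xi j) =
          inc ((M⁻¹ * M) l j) * xi j := by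
        intro j
        rw [Matrix.mul_apply, map_sum, Finset.sum_mul]
        refine Finset.sum_congr rfl fun k _ => ?_
        rw [map_mul, mul_assoc]
      simp only [h2, this, Matrix.one_apply]
      simp
    have e2 : xi l = φ (∑ k, inc (d k) * xi k) -
      (∑ k, (inc (M⁻¹ l k) * (φ (xi k) - ∑ j, inc (M k j) * xi j)) -
       ∑ k, (inc (M⁻¹ l k) - φ (inc (d k))) * φ (xi k)) := by
      conv_lhs => rw [e1]
      simp only [map_sum, map_mul, mul_sub, sub_mul, Finset.sum_sub_distrib]
      abel
    rw [e2]
    refine sub_mem (Submodule.mem_sup_left ⟨⟨_, rfl⟩, ?_⟩) (Submodule.mem_sup_right ?_)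
    · change pr (φ _) = 0
      rw [hψ, map_sum, map_sum]
      refine Finset.sum_eq_zero fun k _ => ?_
      rw [map_mul, hpxi, mul_zero, map_zero]
    · refine sub_mem (Submodule.sum_mem _ fun k _ => ?_) (Submodule.sum_mem _ fun k _ => ?_)
      · exact htopN2 (Submodule.mul_mem_mul Submodule.mem_top (hφxi k))
      · rw [pow_two]
        exact Submodule.mul_mem_mul (hincN _ _ (hd k)) (hφxiN k)
  have hVT : VK incL ≤ T ⊔ NK pr ^ 2 := by
    rintro _ ⟨_, ⟨v, rfl⟩, rfl⟩
    have : ExteriorAlgebra.ι F v = ∑ k, v k • ExteriorAlgebra.ι F (Pi.single k (1:F)) := by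
      conv_lhs => rw [pi_eq_sum_univ' v]
      rw [map_sum]
      refine Finset.sum_congr rfl fun k _ => ?_
      rw [map_smul]
    rw [this, map_sum]
    refine Submodule.sum_mem _ fun k _ => ?_
    rw [map_smul]
    exact Submodule.smul_mem _ _ (hxiT k)
  have hNT : NK pr ≤ T ⊔ NK pr ^ 2 := by
    rw [NK_eq S]
    conv_rhs => rw [← NK_eq S]
    rw [Submodule.mul_le]
    intro r _ v hv
    obtain ⟨d, hd⟩ := hdec r
    obtain ⟨t, ht, w, hw, rfl⟩ := Submodule.mem_sup.1 (hVT hv)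
    have e : r * (t + w) = φ (inc d) * t + ((r - φ (inc d)) * t + r * w) := by
      rw [sub_mul, mul_add]; abel
    rw [e]
    refine add_mem (Submodule.mem_sup_left ?_) (Submodule.mem_sup_right (add_mem ?_ ?_))
    · obtain ⟨⟨a, rfl⟩, ha⟩ := ht
      refine ⟨⟨inc d * a, by simp⟩, top_mul_NK (Submodule.mul_mem_mul Submodule.mem_top ha)⟩
    · rw [pow_two]
      exact Submodule.mul_mem_mul hd ht.2
    · exact htopN2 (Submodule.mul_mem_mul Submodule.mem_top hw)
  have hTN : T ≤ NK pr := inf_le_right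
  have hTT : T * T ≤ T := Submodule.mul_le.2 hTmul
  have hstep : ∀ k : ℕ, NK pr ^ (k+1) ≤ T ^ (k+1) ⊔ NK pr ^ (k+2) := by
    intro k
    induction k with
    | zero => simpa using hNT
    | succ k ih =>
      calc NK pr ^ (k+2) = NK pr ^ (k+1) * NK pr := pow_succ _ _
        _ ≤ (T ^ (k+1) ⊔ NK pr ^ (k+2)) * NK pr := sm_le_left ih
        _ = T ^ (k+1) * NK pr ⊔ NK pr ^ (k+3) := by rw [Submodule.sup_mul, ← pow_succ]
        _ ≤ T ^ (k+2) ⊔ NK pr ^ (k+3) := by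
          refine sup_le ((sm_le_right hNT).trans ?_) le_sup_right
          rw [Submodule.mul_sup, ← pow_succ]
          refine sup_le_sup le_rfl ((sm_le_left (pow_le_pow_left' hTN (k+1))).trans ?_)
          rw [← pow_add]
  have hTk : ∀ k : ℕ, T ^ (k+1) ≤ T := by
    intro k
    induction k with
    | zero => simp
    | succ k ih => rw [pow_succ]; exact (sm_le_left ih).trans hTT
  have hall : ∀ k : ℕ, NK pr ≤ T ⊔ NK pr ^ (k+1) := by
    intro k
    induction k with
    | zero => simp
    | succ k ih => exact ih.trans (sup_le le_sup_left ((hstep k).trans (sup_le_sup (hTk k) le_rfl)))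
  have hN := hall n
  rw [NK_pow S, sup_bot_eq] at hN
  intro r
  obtain ⟨d, hd⟩ := hdec r
  obtain ⟨⟨s, hs⟩, -⟩ := hN hd
  refine ⟨s + inc d, ?_⟩
  have : φ s = r - φ (inc d) := hs
  rw [map_add, this, sub_add_cancel]

end GenPart

lemma noeth_inj {R : Type*} [Ring R] [IsNoetherianRing R] (φ : R →+* R)
    (h : Function.Surjective φ) : Function.Injective φ := by
  let f : ℕ →o Ideal R := ⟨fun k => RingHom.ker (φ ^ k), by
    apply monotone_nat_of_le_succ
    intro k x hx
    rw [RingHom.mem_ker] at *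
    rw [pow_succ', RingHom.mul_def, RingHom.comp_apply, hx, map_zero]⟩
  obtain ⟨N, hN⟩ := monotone_stabilizes_iff_noetherian.2 (inferInstance : IsNoetherian R R) f
  have hsurj : ∀ k : ℕ, Function.Surjective (φ ^ k) := by
    intro k
    rw [RingHom.coe_pow]
    exact h.iterate k
  rw [injective_iff_map_eq_zero]
  intro x hx
  obtain ⟨y, rfl⟩ := hsurj N x
  have h1 : y ∈ f (N+1) := by
    change (φ ^ (N+1)) y = 0
    rw [pow_succ', RingHom.mul_def, RingHom.comp_apply, hx]
  rw [← hN (N+1) (Nat.le_succ N)] at h1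
  exact h1

section MaxPart

variable {F : Type*} [Field F] {R A : Type*} [Ring R] [Algebra F R] [CommRing A]
  [Algebra F A]

def GHomog (π : R →ₐ[F] R) (I : Ideal R) : Prop :=
  ∀ a, π a = a → ∀ b, π b + b = 0 → a + b ∈ I → a ∈ I ∧ b ∈ I

def GMax (π : R →ₐ[F] R) (I : Ideal R) : Prop :=
  GHomog π I ∧ I ≠ ⊤ ∧ ∀ I', GHomog π I' → I' ≠ ⊤ → I ≤ I' → I' = I

lemma gen_max {π φ : R →ₐ[F] R} {pr : R →ₐ[F] A} {ψ : A →ₐ[F] A}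
    (hpr : Function.Surjective pr) (hunit : ∀ r, pr r = 1 → IsUnit r)
    (hodd : ∀ b, π b + b = 0 → pr b = 0)
    (hψ : ∀ r, pr (φ r) = ψ (pr r))
    (hmax : ∀ I : Ideal R, GMax π I → GMax π (I.map φ.toRingHom))
    (I : Ideal A) (hI : I.IsMaximal) : (I.map ψ.toRingHom).IsMaximal := by
  have hpr' : Function.Surjective pr.toRingHom := hpr
  have hom : ∀ L : Ideal A, GHomog π (L.comap pr.toRingHom) := by
    intro L a _ b hb hab
    have h0 : pr b = 0 := hodd b hb
    have hb' : b ∈ L.comap pr.toRingHom := by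
      change pr b ∈ L
      rw [h0]; exact L.zero_mem
    exact ⟨(Ideal.add_mem_iff_left _ hb').1 hab, hb'⟩
  have hne : ∀ K : Ideal R, K ≠ ⊤ → K.map pr.toRingHom ≠ ⊤ := by
    intro K hK h
    have h1 : (1 : A) ∈ K.map pr.toRingHom := h ▸ Submodule.mem_top
    obtain ⟨k, hk, hk1⟩ := (Ideal.mem_map_iff_of_surjective _ hpr').1 h1
    exact hK (Ideal.eq_top_of_isUnit_mem _ hk (hunit k hk1))
  have hcne : ∀ L : Ideal A, L ≠ ⊤ → L.comap pr.toRingHom ≠ ⊤ := by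
    intro L hL h
    exact hL ((Ideal.comap_eq_top_iff).1 h)
  have hP : GMax π (I.comap pr.toRingHom) := by
    refine ⟨hom I, hcne I hI.ne_top, ?_⟩
    intro I' hI' hI'ne hle
    refine le_antisymm ?_ hle
    have h1 : I ≤ I'.map pr.toRingHom := by
      rw [← Ideal.map_comap_of_surjective _ hpr' I]
      exact Ideal.map_mono hle
    rw [hI.eq_of_le (hne I' hI'ne) h1]
    exact Ideal.le_comap_map
  have hK := hmax _ hP
  set K := (I.comap pr.toRingHom).map φ.toRingHom with hKdef
  have hKe : K.map pr.toRingHom = I.map ψ.toRingHom := by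
    have : pr.toRingHom.comp φ.toRingHom = ψ.toRingHom.comp pr.toRingHom := RingHom.ext hψ
    rw [hKdef, Ideal.map_map, this, ← Ideal.map_map, Ideal.map_comap_of_surjective _ hpr']
  rw [← hKe]
  refine Ideal.isMaximal_def.2 ⟨hne K hK.2.1, ?_⟩
  intro L hL
  by_contra hLt
  have h2 := hK.2.2 (L.comap pr.toRingHom) (hom L) (hcne L hLt) (Ideal.map_le_iff_le_comap.1 hL.le)
  have h3 : L = K.map pr.toRingHom := by
    rw [← h2, Ideal.map_comap_of_surjective _ hpr']
  exact hL.ne h3.symm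

lemma pr_sdet (pr : R →ₐ[F] A) {N : ℕ} (M : Matrix (Fin N) (Fin N) R) :
    pr (sdet M) = (Matrix.of fun i j => pr (M i j)).det := by
  rw [sdet, Matrix.det_apply, map_sum]
  refine Finset.sum_congr rfl fun σ _ => ?_
  rw [map_zsmul, map_list_prod, List.map_map]
  rw [← List.prod_ofFn (n := N), List.ofFn_eq_map]
  rfl

lemma gen_comm {n : ℕ} {pr : R →ₐ[F] A} {inc : A →ₐ[F] R} {incL : ExtA F n →ₐ[F] R}
    {D : Fin n → R →ₗ[F] R} (S : SData pr inc incL D) (φ : R →ₐ[F] R)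
    (h0 : ∀ v, pr (φ (incL (ExteriorAlgebra.ι F v))) = 0) (r : R) :
    pr (φ r) = (pr.comp (φ.comp inc)) (pr r) := by
  have h1 : (pr.comp (φ.comp incL)) = (Algebra.ofId F A).comp ExteriorAlgebra.algebraMapInv := by
    apply ExteriorAlgebra.hom_ext
    ext v
    change pr (φ (incL (ExteriorAlgebra.ι F _))) = algebraMap F A (ExteriorAlgebra.algebraMapInv _)
    rw [h0]
    simp [algInv_ι]
  refine S.hind (fun r => pr (φ r) = (pr.comp (φ.comp inc)) (pr r)) ?_ ?_ r
  · intro a l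
    have h2 : pr (φ (incL l)) = algebraMap F A (ExteriorAlgebra.algebraMapInv l) :=
      DFunLike.congr_fun h1 l
    rw [map_mul, map_mul, map_mul pr, map_mul, S.hpi, S.hpl, h2, AlgHom.commutes]
    rfl
  · intro x y hx hy
    rw [map_add, map_add, map_add, map_add, hx, hy]

end MaxPart

section Concrete

variable (F : Type*) [Field F] (m n : ℕ)

noncomputable def inclP : PolyA F m →ₐ[F] SAlg F m n := Algebra.TensorProduct.includeLeft

noncomputable def inclL : ExtA F n →ₐ[F] SAlg F m n := Algebra.TensorProduct.includeRight

lemma projP_tmul (p : PolyA F m) (l : ExtA F n) :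
    projP F m n (p ⊗ₜ l) = p * C (ExteriorAlgebra.algebraMapInv l) := by
  simp [projP, Algebra.ofId_apply]

lemma tmul_eq (p : PolyA F m) (l : ExtA F n) :
    p ⊗ₜ l = inclP F m n p * inclL F m n l := by
  simp [inclP, inclL]

lemma sdata : SData (projP F m n) (inclP F m n) (inclL F m n) (Dxi F m n) where
  hpi p := by simp [inclP, projP_tmul]
  hpl l := by
    change projP F m n (1 ⊗ₜ l) = _
    rw [projP_tmul, one_mul]; rfl
  hind P h1 h2 r := by
    induction r using TensorProduct.induction_on with
    | zero => 
      have := h1 0 0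
      rwa [map_zero, zero_mul] at this
    | tmul p l => rw [tmul_eq]; exact h1 p l
    | add a b ha hb => exact h2 a b ha hb
  hD k p l := by
    rw [← tmul_eq, ← tmul_eq]; rfl

lemma proj_Dx (j : Fin m) (r : SAlg F m n) :
    projP F m n (Dx F m n j r) = pderiv j (projP F m n r) := by
  induction r using TensorProduct.induction_on with
  | zero => rw [map_zero, map_zero, map_zero]
  | add a b ha hb => rw [map_add, map_add, map_add, map_add, ha, hb]
  | tmul p l =>
    have : Dx F m n j (p ⊗ₜ l) = (pderiv j p) ⊗ₜ l := rfl
    rw [this, projP_tmul, projP_tmul, Derivation.leibniz, pderiv_C, smul_zero, zero_add,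
      smul_eq_mul, mul_comm]

lemma proj_parity (r : SAlg F m n) : projP F m n (parityInvol F m n r) = projP F m n r := by
  induction r using TensorProduct.induction_on with
  | zero => rw [map_zero]
  | add a b ha hb => rw [map_add, map_add, map_add, ha, hb]
  | tmul p l =>
    have : parityInvol F m n (p ⊗ₜ l) = p ⊗ₜ (ExteriorAlgebra.map (-LinearMap.id) l) := rfl
    rw [this, projP_tmul, projP_tmul]
    have h : (ExteriorAlgebra.algebraMapInv (R := F) (M := Fin n → F)).comp
        (ExteriorAlgebra.map (-LinearMap.id)) = ExteriorAlgebra.algebraMapInv := by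
      apply ExteriorAlgebra.hom_ext
      ext v
      simp [algInv_ι]
    rw [show ExteriorAlgebra.algebraMapInv (ExteriorAlgebra.map (-LinearMap.id) l) =
      ExteriorAlgebra.algebraMapInv l from DFunLike.congr_fun h l]

lemma proj_odd (hchar : ringChar F ≠ 2) (b : SAlg F m n) (hb : parityInvol F m n b + b = 0) :
    projP F m n b = 0 := by
  have h := congrArg (projP F m n) hb
  rw [map_add, proj_parity, map_zero, ← two_mul] at h
  have h2 : (2 : F) ≠ 0 := Ring.two_ne_zero hchar
  have h3 : (2 : PolyA F m) ≠ 0 := by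
    have : (2 : PolyA F m) = C 2 := (map_ofNat C 2).symm
    rw [this]
    exact (map_ne_zero_iff C (C_injective _ _)).2 h2
  exact (mul_eq_zero.1 h).resolve_left h3

lemma ι_odd (v : Fin n → F) : inclL F m n (ExteriorAlgebra.ι F v) ∈ oddP F m n := by
  change parityInvol F m n (1 ⊗ₜ ExteriorAlgebra.ι F v) + 1 ⊗ₜ ExteriorAlgebra.ι F v = 0
  have : parityInvol F m n (1 ⊗ₜ ExteriorAlgebra.ι F v) =
    1 ⊗ₜ (ExteriorAlgebra.map (-LinearMap.id) (ExteriorAlgebra.ι F v)) := rfl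
  rw [this, ExteriorAlgebra.map_apply_ι]
  rw [← TensorProduct.tmul_add]
  simp

lemma Jg_proj {r : SAlg F m n} (h : r ∈ Jg F m n) : projP F m n r = 0 := by
  have : Jg F m n ≤ RingHom.ker (projP F m n).toRingHom := by
    rw [Jg, Ideal.span_le]
    rintro _ ⟨k, rfl⟩
    change projP F m n (1 ⊗ₜ _) = 0
    rw [projP_tmul, algInv_ι, map_zero, mul_zero]
  exact this h

lemma unit_of_sub {N : ℕ} {M : Matrix (Fin N) (Fin N) (SAlg F m n)}
    (h : ∃ c : F, c ≠ 0 ∧ sdet M - algebraMap F (SAlg F m n) c ∈ Jg F m n) :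
    IsUnit (Matrix.of fun i j => projP F m n (M i j)).det := by
  obtain ⟨c, hc, h⟩ := h
  have := Jg_proj F m n h
  rw [map_sub, pr_sdet, AlgHom.commutes, sub_eq_zero] at this
  rw [this]
  exact (IsUnit.mk0 c hc).map _

lemma homog_iff (I : Ideal (SAlg F m n)) : IsHomog F m n I ↔ GHomog (parityInvol F m n) I :=
  Iff.rfl

lemma max_iff (I : Ideal (SAlg F m n)) : IsMaxHomog F m n I ↔ GMax (parityInvol F m n) I :=
  Iff.rfl

instance finExt : Module.Finite F (ExtA F n) :=
  Module.Finite.of_basis (Module.Basis.ExteriorAlgebra (Pi.basisFun F (Fin n)))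

lemma noethS : IsNoetherianRing (SAlg F m n) := by
  have : IsNoetherian (PolyA F m) (SAlg F m n) := inferInstance
  exact isNoetherian_of_tower (PolyA F m) this

end Concrete

/-- Main theorem: over an algebraically closed field, a parity-preserving endomorphism of
the polynomial superalgebra satisfying the super-Jacobian condition which maps maximal
`ℤ₂`-homogeneous ideals to maximal `ℤ₂`-homogeneous ideals is an automorphism. -/
theorem super_jacobian_automorphism (F : Type*) [Field F] [IsAlgClosed F]
    (hchar : ringChar F ≠ 2) (m n : ℕ) (φ : SAlg F m n →ₐ[F] SAlg F m n)
    (hev : ∀ a ∈ evenA F m n, φ a ∈ evenA F m n)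
    (hod : ∀ b ∈ oddP F m n, φ b ∈ oddP F m n)
    (hJx : ∃ c : F, c ≠ 0 ∧
      sdet (Matrix.of fun i j => Dx F m n j (φ (xg F m n i)))
        - algebraMap F (SAlg F m n) c ∈ Jg F m n)
    (hJξ : ∃ c : F, c ≠ 0 ∧
      sdet (Matrix.of fun k l => Dxi F m n l (φ (xig F m n k)))
        - algebraMap F (SAlg F m n) c ∈ Jg F m n)
    (hmax : ∀ I : Ideal (SAlg F m n), IsMaxHomog F m n I →
      IsMaxHomog F m n (Ideal.map φ.toRingHom I)) :
    Function.Bijective φ := by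
  have S := sdata F m n
  have hM := unit_of_sub F m n hJξ
  have hf := unit_of_sub F m n hJx
  have h0 : ∀ v, projP F m n (φ (inclL F m n (ExteriorAlgebra.ι F v))) = 0 :=
    fun v => proj_odd F m n hchar _ (hod _ (ι_odd F m n v))
  have hψ := gen_comm S φ h0
  have hs : Function.Surjective ((projP F m n).comp (φ.comp (inclP F m n))) := by
    apply poly_surj
    · have he : (Matrix.of fun i j => projP F m n
          ((Matrix.of fun i j => Dx F m n j (φ (xg F m n i))) i j)) =
          (Matrix.of fun i j => pderiv j (((projP F m n).comp (φ.comp (inclP F m n))) (X i)) :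
            Matrix (Fin m) (Fin m) (PolyA F m)) := by
        ext1 i j
        exact proj_Dx F m n j _
      rw [← he]
      exact hf
    · exact gen_max (π := parityInvol F m n) (φ := φ) (pr := projP F m n)
        (fun p => ⟨_, S.hpi p⟩) (fun r hr => isUnit_of_proj S hr)
        (proj_odd F m n hchar) hψ hmax
  have hsurj : Function.Surjective φ := gen_surj S φ _ hψ hs hM
  have := noethS F m n
  exact ⟨noeth_inj φ.toRingHom hsurj, hsurj⟩
end
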